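/- Integration by parts for the second-order heat-convolution increment: let x = (x¹,…,x^N) : [0,T] → ℝ^N be continuously differentiable, let φ be a Schwartz function on ℝ^n, and for 0 ≤ s ≤ t ≤ T set x^{2,ij}_{ts} = ∫_s^t (x^i)'(u)(x^j_u − x^j_s) du. Then for all i,j ∈ {1,…,N} and all 0 ≤ s ≤ t ≤ T the following equality holds in L^p(ℝ^n): ∫_s^t (x^i)'(u)(x^j_u − x^j_s)(g_{t−u} * φ) du = x^{2,ij}_{ts} φ + ∫_s^t x^{2,ij}_{us} (∂g_{t−u} * φ) du, where all integrals are absolutely convergent Bochner integrals in L^p(ℝ^n) (at u = t the first integrand is interpreted as (x^i)'(t)(x^j_t − x^j_s)φ). -/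

import Mathlib

open MeasureTheory Real
open scoped ENNReal

/-- The heat kernel on ℝ^n: `g_t(ξ) = (2πt)^(-n/2) exp(-|ξ|²/(2t))`. -/
noncomputable def heatKernel (n : ℕ) (t : ℝ) : EuclideanSpace ℝ (Fin n) → ℝ :=
  fun ξ => (2 * π * t) ^ (-(n : ℝ) / 2) * Real.exp (-‖ξ‖ ^ 2 / (2 * t))

/-- Time derivative of the heat kernel:
`∂g_t(ξ) = (2πt)^(-n/2) e^{-|ξ|²/(2t)} (|ξ|²/(2t²) - n/(2t))`. -/
noncomputable def heatKernelDt (n : ℕ) (t : ℝ) : EuclideanSpace ℝ (Fin n) → ℝ :=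
  fun ξ => (2 * π * t) ^ (-(n : ℝ) / 2) * Real.exp (-‖ξ‖ ^ 2 / (2 * t)) *
    (‖ξ‖ ^ 2 / (2 * t ^ 2) - (n : ℝ) / (2 * t))

/-- Convolution of two real functions on ℝ^n. -/
noncomputable def convol {n : ℕ} (f g : EuclideanSpace ℝ (Fin n) → ℝ) :
    EuclideanSpace ℝ (Fin n) → ℝ :=
  fun ξ => ∫ η, f η * g (ξ - η)

/-- Heat semigroup at the level of functions: `S_t φ = g_t * φ` for `t > 0`,
`S_0 = Id` (also for `t ≤ 0`). -/
noncomputable def heatS (n : ℕ) (t : ℝ) (φ : EuclideanSpace ℝ (Fin n) → ℝ) :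
    EuclideanSpace ℝ (Fin n) → ℝ :=
  if 0 < t then convol (heatKernel n t) φ else φ

section HeatKernel

variable {n : ℕ}

lemma heatKernel_nonneg {r : ℝ} (hr : 0 ≤ r) (z : EuclideanSpace ℝ (Fin n)) :
    0 ≤ heatKernel n r z := by
  unfold heatKernel
  positivity

lemma continuous_heatKernel (r : ℝ) : Continuous (heatKernel n r) := by
  unfold heatKernel
  fun_prop

lemma continuous_heatKernelDt (r : ℝ) : Continuous (heatKernelDt n r) := by
  unfold heatKernelDt
  fun_prop

/-- The standard Gaussian has finite polynomial moments. -/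
lemma integrable_heatKernel_one_mul_pow (k : ℕ) :
    Integrable (fun z : EuclideanSpace ℝ (Fin n) => heatKernel n 1 z * (1 + ‖z‖) ^ k) := by
  have hgauss : Integrable
      (fun z : EuclideanSpace ℝ (Fin n) => Real.exp (-(1 / 4) * ‖z‖ ^ 2)) := by
    have h := (GaussianFourier.integrable_cexp_neg_mul_sq_norm_add (b := 1 / 4)
      (V := EuclideanSpace ℝ (Fin n)) (by norm_num) 0 0).norm
    refine h.congr (Filter.Eventually.of_forall fun z => ?_)
    have : (-(1 / 4 : ℂ) * (‖z‖ : ℂ) ^ 2 + 0 * ((inner ℝ (0 : EuclideanSpace ℝ (Fin n)) z : ℝ) : ℂ))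
        = ((-(1 / 4) * ‖z‖ ^ 2 : ℝ) : ℂ) := by push_cast; ring
    simp only [this, Complex.norm_exp_ofReal]
  refine (hgauss.const_mul ((2 * π * 1) ^ (-(n : ℝ) / 2) * Real.exp ((k : ℝ) ^ 2))).mono'
    ((continuous_heatKernel 1).mul (by fun_prop)).aestronglyMeasurable
    (Filter.Eventually.of_forall fun z => ?_)
  rw [Real.norm_of_nonneg (mul_nonneg (heatKernel_nonneg zero_le_one z) (by positivity))]
  have hpow : (1 + ‖z‖) ^ k ≤ Real.exp (k * ‖z‖) := by
    rw [Real.exp_nat_mul]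
    gcongr
    linarith [Real.add_one_le_exp ‖z‖]
  unfold heatKernel
  rw [mul_assoc (_ ^ _), mul_assoc (_ ^ _)]
  refine mul_le_mul_of_nonneg_left ?_ (by positivity)
  refine (mul_le_mul_of_nonneg_left hpow (Real.exp_pos _).le).trans ?_
  rw [← Real.exp_add, ← Real.exp_add]
  refine Real.exp_le_exp.mpr ?_
  nlinarith [sq_nonneg ((k : ℝ) - ‖z‖ / 2)]

lemma integrable_heatKernel_one :
    Integrable (heatKernel n 1) := by
  simpa using integrable_heatKernel_one_mul_pow (n := n) 0

lemma integral_heatKernel_one : ∫ z, heatKernel n 1 z = 1 := by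
  have h := GaussianFourier.integral_rexp_neg_mul_sq_norm
    (V := EuclideanSpace ℝ (Fin n)) (b := 1 / 2) (by norm_num)
  have h2 : ∀ z : EuclideanSpace ℝ (Fin n), heatKernel n 1 z
      = (2 * π) ^ (-(n : ℝ) / 2) * Real.exp (-(1 / 2) * ‖z‖ ^ 2) := by
    intro z
    unfold heatKernel
    rw [mul_one]
    congr 2
    ring
  simp_rw [h2]
  rw [integral_const_mul, h, finrank_euclideanSpace_fin, show π / (1 / 2) = 2 * π by ring,
    neg_div, Real.rpow_neg (by positivity)]
  exact inv_mul_cancel₀ (by positivity)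

/-- The heat convolution as a Gaussian average at scale `√r`. -/
lemma convol_heatKernel_eq {r : ℝ} (hr : 0 < r) (f : EuclideanSpace ℝ (Fin n) → ℝ)
    (ξ : EuclideanSpace ℝ (Fin n)) :
    convol (heatKernel n r) f ξ = ∫ z, heatKernel n 1 z * f (ξ - √r • z) := by
  have hsqrt : 0 < √r := Real.sqrt_pos.mpr hr
  have h := Measure.integral_comp_smul (volume : Measure (EuclideanSpace ℝ (Fin n)))
    (fun η => heatKernel n r η * f (ξ - η)) (√r)
  have hscale : ∀ z : EuclideanSpace ℝ (Fin n),
      heatKernel n r (√r • z) = (√r ^ n)⁻¹ * heatKernel n 1 z := by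
    intro z
    unfold heatKernel
    rw [norm_smul, Real.norm_of_nonneg hsqrt.le, mul_pow, Real.sq_sqrt hr.le, mul_one,
      Real.mul_rpow (by positivity) hr.le, neg_div, Real.rpow_neg hr.le]
    have h1 : r ^ ((n : ℝ) / 2) = √r ^ n := by
      rw [Real.sqrt_eq_rpow, ← Real.rpow_natCast, ← Real.rpow_mul hr.le]
      congr 1
      ring
    rw [h1, show -(r * ‖z‖ ^ 2) / (2 * r) = -‖z‖ ^ 2 / (2 * 1) by field_simp]
    ring_nf
  simp_rw [hscale, mul_assoc] at h
  rw [integral_const_mul, finrank_euclideanSpace_fin, abs_of_pos (by positivity),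
    smul_eq_mul] at h
  exact (mul_left_cancel₀ (by positivity) h).symm

lemma hasDerivAt_heatKernel {r : ℝ} (hr : 0 < r) (η : EuclideanSpace ℝ (Fin n)) :
    HasDerivAt (fun r => heatKernel n r η) (heatKernelDt n r η) r := by
  unfold heatKernel heatKernelDt
  have h1 : HasDerivAt (fun r : ℝ => (2 * π * r) ^ (-(n : ℝ) / 2))
      (2 * π * (-(n : ℝ) / 2) * (2 * π * r) ^ (-(n : ℝ) / 2 - 1)) r := by
    have := ((hasDerivAt_id r).const_mul (2 * π)).rpow_const (p := -(n : ℝ) / 2)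
      (Or.inl (by simp; positivity))
    simpa using this
  have h2 : HasDerivAt (fun r : ℝ => Real.exp (-‖η‖ ^ 2 / (2 * r)))
      (Real.exp (-‖η‖ ^ 2 / (2 * r)) * (‖η‖ ^ 2 / (2 * r ^ 2))) r := by
    have h3 : HasDerivAt (fun r : ℝ => -‖η‖ ^ 2 / (2 * r)) (‖η‖ ^ 2 / (2 * r ^ 2)) r := by
      have := (hasDerivAt_const r (-‖η‖ ^ 2)).div ((hasDerivAt_id r).const_mul 2)
        (by simp; positivity)
      refine this.congr_deriv ?_
      simp only [id]
      field_simp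
      ring
    exact h3.exp
  refine (h1.mul h2).congr_deriv ?_
  rw [Real.rpow_sub_one (by positivity)]
  field_simp
  ring

lemma abs_heatKernelDt_le {r : ℝ} (hr : 0 < r) (η : EuclideanSpace ℝ (Fin n)) :
    |heatKernelDt n r η| ≤ (2 * π * r) ^ (-(n : ℝ) / 2) * ((1 + n) / r) := by
  unfold heatKernelDt
  rw [mul_assoc, abs_mul, abs_of_nonneg (by positivity : 0 ≤ (2 * π * r) ^ (-(n : ℝ) / 2))]
  gcongr
  set y := ‖η‖ ^ 2 / (2 * r) with hy
  have hy0 : 0 ≤ y := by positivity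
  have h1 : y * Real.exp (-y) ≤ 1 :=
    (Real.mul_exp_neg_le_exp_neg_one y).trans (Real.exp_le_one_iff.mpr (by norm_num))
  have h2 : Real.exp (-y) ≤ 1 := Real.exp_le_one_iff.mpr (by linarith)
  have h3 : Real.exp (-‖η‖ ^ 2 / (2 * r)) * (‖η‖ ^ 2 / (2 * r ^ 2) - (n : ℝ) / (2 * r))
      = (y * Real.exp (-y) - n / 2 * Real.exp (-y)) / r := by
    rw [neg_div, ← hy, show ‖η‖ ^ 2 / (2 * r ^ 2) = y / r by rw [hy]; field_simp]
    field_simp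
  rw [h3, abs_div, abs_of_pos hr]
  gcongr
  have h4 : 0 ≤ y * Real.exp (-y) := by positivity
  have h5 : (n : ℝ) / 2 * Real.exp (-y) ≤ n := by nlinarith [(Nat.cast_nonneg n : (0 : ℝ) ≤ n)]
  have h6 : 0 ≤ (n : ℝ) / 2 * Real.exp (-y) := by positivity
  rw [abs_le]
  constructor <;> linarith

/-- Differentiation of the heat convolution in time, on the kernel. -/
lemma hasDerivAt_convol_heatKernel {f : EuclideanSpace ℝ (Fin n) → ℝ} (hf : Integrable f)
    (ξ : EuclideanSpace ℝ (Fin n)) {r : ℝ} (hr : 0 < r) :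
    HasDerivAt (fun r => convol (heatKernel n r) f ξ) (convol (heatKernelDt n r) f ξ) r := by
  have hf' : Integrable (fun η => f (ξ - η)) := hf.comp_sub_left ξ
  have hbdd : ∀ η, ‖heatKernel n r η‖ ≤ (2 * π * r) ^ (-(n : ℝ) / 2) := by
    intro η
    rw [Real.norm_of_nonneg (heatKernel_nonneg hr.le η)]
    refine mul_le_of_le_one_right (by positivity) (Real.exp_le_one_iff.mpr ?_)
    rw [neg_div]
    exact neg_nonpos.mpr (by positivity)
  refine (hasDerivAt_integral_of_dominated_loc_of_deriv_le
    (F := fun r η => heatKernel n r η * f (ξ - η))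
    (F' := fun r η => heatKernelDt n r η * f (ξ - η))
    (bound := fun η => (2 * π * (r / 2)) ^ (-(n : ℝ) / 2) * ((1 + n) / (r / 2)) * ‖f (ξ - η)‖)
    (Ioi_mem_nhds (half_lt_self hr)) (Filter.Eventually.of_forall fun q =>
      (continuous_heatKernel q).aestronglyMeasurable.mul hf'.aestronglyMeasurable)
    (hf'.bdd_mul (continuous_heatKernel r).aestronglyMeasurable
      (Filter.Eventually.of_forall hbdd))
    ((continuous_heatKernelDt r).aestronglyMeasurable.mul hf'.aestronglyMeasurable)
    (Filter.Eventually.of_forall fun η q hq => ?_) (hf'.norm.const_mul _)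
    (Filter.Eventually.of_forall fun η q hq => ?_)).2
  · have hq' : r / 2 < q := hq
    have hq0 : 0 < q := (half_pos hr).trans hq'
    rw [norm_mul]
    gcongr
    refine (abs_heatKernelDt_le hq0 η).trans ?_
    refine mul_le_mul ?_ (by gcongr) (by positivity) (by positivity)
    refine Real.rpow_le_rpow_of_nonpos (by positivity) (by gcongr) ?_
    rw [neg_div]
    exact neg_nonpos.mpr (by positivity)
  · exact (hasDerivAt_heatKernel ((half_pos hr).trans hq) η).mul_const _

lemma SchwartzMap.exists_decay (φ : SchwartzMap (EuclideanSpace ℝ (Fin n)) ℝ) (k : ℕ) :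
    ∃ C, 0 ≤ C ∧ ∀ y, |φ y| ≤ C / (1 + ‖y‖) ^ k ∧ ‖fderiv ℝ φ y‖ ≤ C / (1 + ‖y‖) ^ k := by
  refine ⟨2 ^ k * (Finset.Iic (k, 1)).sup (fun m => SchwartzMap.seminorm ℝ m.1 m.2) φ,
    by positivity, fun y => ⟨?_, ?_⟩⟩
  · rw [le_div_iff₀' (by positivity), ← Real.norm_eq_abs, ← norm_iteratedFDeriv_zero (𝕜 := ℝ)]
    exact SchwartzMap.one_add_le_sup_seminorm_apply (m := (k, 1)) le_rfl zero_le_one φ y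
  · rw [le_div_iff₀' (by positivity), ← norm_iteratedFDeriv_one (𝕜 := ℝ)]
    exact SchwartzMap.one_add_le_sup_seminorm_apply (m := (k, 1)) le_rfl le_rfl φ y

/-- Polynomial decay is preserved by Gaussian averages at bounded scale. -/
lemma abs_integral_le_of_gaussian_decay {k : ℕ} {A b q : ℝ} (hA : 0 ≤ A) (hq : 0 ≤ q)
    (hqb : q ≤ b) (ξ : EuclideanSpace ℝ (Fin n)) {f : EuclideanSpace ℝ (Fin n) → ℝ}
    (hf : ∀ z, |f z| ≤ A * (heatKernel n 1 z * (1 + ‖z‖)) / (1 + ‖ξ - q • z‖) ^ k) :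
    |∫ z, f z| ≤ A * (1 + b) ^ k *
      (∫ z : EuclideanSpace ℝ (Fin n), heatKernel n 1 z * (1 + ‖z‖) ^ (k + 1)) /
        (1 + ‖ξ‖) ^ k := by
  have key : ∀ z, ‖f z‖ ≤ A * (1 + b) ^ k / (1 + ‖ξ‖) ^ k *
      (heatKernel n 1 z * (1 + ‖z‖) ^ (k + 1)) := by
    intro z
    have hpeetre : 1 + ‖ξ‖ ≤ (1 + ‖ξ - q • z‖) * ((1 + b) * (1 + ‖z‖)) := by
      have h1 : ‖ξ‖ ≤ ‖ξ - q • z‖ + q * ‖z‖ := by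
        have := norm_add_le (ξ - q • z) (q • z)
        rwa [sub_add_cancel, norm_smul, Real.norm_of_nonneg hq] at this
      have h2 : q * ‖z‖ ≤ b * ‖z‖ := by gcongr
      have h3 : 0 ≤ b := hq.trans hqb
      have h4 : 0 ≤ ‖ξ - q • z‖ * (b + ‖z‖ + b * ‖z‖) := by positivity
      nlinarith [norm_nonneg z]
    have hpow := pow_le_pow_left₀ (by positivity) hpeetre k
    rw [mul_pow, mul_pow] at hpow
    refine (hf z).trans ?_
    have hγ := heatKernel_nonneg zero_le_one z
    rw [div_mul_eq_mul_div, div_le_div_iff₀ (by positivity) (by positivity)]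
    calc _ ≤ A * (heatKernel n 1 z * (1 + ‖z‖)) *
          ((1 + ‖ξ - q • z‖) ^ k * ((1 + b) ^ k * (1 + ‖z‖) ^ k)) := by gcongr
      _ = _ := by ring
  refine (norm_integral_le_of_norm_le
    ((integrable_heatKernel_one_mul_pow (k + 1)).const_mul _)
    (Filter.Eventually.of_forall key)).trans_eq ?_
  rw [integral_const_mul]
  ring

variable (φ : SchwartzMap (EuclideanSpace ℝ (Fin n)) ℝ)

lemma continuous_gaussian_average (ξ : EuclideanSpace ℝ (Fin n)) :
    Continuous (fun r : ℝ => ∫ z, heatKernel n 1 z * φ (ξ - √r • z)) := by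
  obtain ⟨C, -, hC⟩ := φ.exists_decay 0
  refine continuous_of_dominated (bound := fun z => heatKernel n 1 z * C)
    (fun r => ((continuous_heatKernel 1).mul (by fun_prop)).aestronglyMeasurable)
    (fun r => Filter.Eventually.of_forall fun z => ?_) (integrable_heatKernel_one.mul_const C)
    (Filter.Eventually.of_forall fun z => by fun_prop)
  rw [norm_mul, Real.norm_of_nonneg (heatKernel_nonneg zero_le_one z)]
  exact mul_le_mul_of_nonneg_left (by simpa using (hC (ξ - √r • z)).1)
    (heatKernel_nonneg zero_le_one z)

/-- Differentiation of the heat convolution in time, on the test function. -/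
lemma hasDerivAt_gaussian_average (ξ : EuclideanSpace ℝ (Fin n)) {r : ℝ} (hr : 0 < r) :
    HasDerivAt (fun r : ℝ => ∫ z, heatKernel n 1 z * φ (ξ - √r • z))
      (∫ z, heatKernel n 1 z * fderiv ℝ φ (ξ - √r • z) (-((1 / (2 * √r)) • z))) r := by
  obtain ⟨C, hC0, hC⟩ := φ.exists_decay 0
  have hfderiv : Continuous (fderiv ℝ φ) := (φ.smooth 1).continuous_fderiv one_ne_zero
  refine (hasDerivAt_integral_of_dominated_loc_of_deriv_le
    (F := fun r z => heatKernel n 1 z * φ (ξ - √r • z))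
    (F' := fun r z => heatKernel n 1 z * fderiv ℝ φ (ξ - √r • z) (-((1 / (2 * √r)) • z)))
    (bound := fun z => C * (1 / (2 * √(r / 2))) * (heatKernel n 1 z * (1 + ‖z‖) ^ 1))
    (Ioi_mem_nhds (half_lt_self hr)) (Filter.Eventually.of_forall fun q =>
      ((continuous_heatKernel 1).mul (by fun_prop)).aestronglyMeasurable)
    ?_ ((continuous_heatKernel 1).mul (by fun_prop)).aestronglyMeasurable
    (Filter.Eventually.of_forall fun z q hq => ?_)
    ((integrable_heatKernel_one_mul_pow 1).const_mul _)
    (Filter.Eventually.of_forall fun z q hq => ?_)).2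
  · refine integrable_heatKernel_one.mul_bdd (c := C) (by fun_prop)
      (Filter.Eventually.of_forall fun z => by simpa using (hC (ξ - √r • z)).1)
  · have hq' : r / 2 < q := hq
    have hγ := heatKernel_nonneg zero_le_one z
    have h1 : ‖fderiv ℝ φ (ξ - √q • z)‖ ≤ C := by simpa using (hC (ξ - √q • z)).2
    rw [norm_mul, Real.norm_of_nonneg hγ]
    have h2 : ‖-((1 / (2 * √q)) • z)‖ ≤ 1 / (2 * √(r / 2)) * (1 + ‖z‖) := by
      rw [norm_neg, norm_smul, Real.norm_of_nonneg (by positivity)]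
      have : 0 < √(r / 2) := Real.sqrt_pos.mpr (half_pos hr)
      gcongr
      linarith
    calc _ ≤ heatKernel n 1 z * (C * (1 / (2 * √(r / 2)) * (1 + ‖z‖))) := by
          gcongr
          exact (ContinuousLinearMap.le_opNorm _ _).trans
            (mul_le_mul h1 h2 (norm_nonneg _) hC0)
      _ = _ := by ring
  · have hq0 : 0 < q := (half_pos hr).trans hq
    have h1 : HasDerivAt (fun q : ℝ => ξ - √q • z) (-((1 / (2 * √q)) • z)) q :=
      ((Real.hasDerivAt_sqrt hq0.ne').smul_const z).const_sub ξ
    exact ((φ.differentiableAt.hasFDerivAt).comp_hasDerivAt q h1).const_mul _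

lemma gaussian_average_zero (ξ : EuclideanSpace ℝ (Fin n)) :
    ∫ z, heatKernel n 1 z * φ (ξ - √0 • z) = φ ξ := by
  simp [integral_mul_const, integral_heatKernel_one]

lemma convol_heatKernelDt_eq (ξ : EuclideanSpace ℝ (Fin n)) {r : ℝ} (hr : 0 < r) :
    convol (heatKernelDt n r) φ ξ =
      ∫ z, heatKernel n 1 z * fderiv ℝ φ (ξ - √r • z) (-((1 / (2 * √r)) • z)) := by
  refine ((hasDerivAt_convol_heatKernel φ.integrable ξ hr).congr_of_eventuallyEq ?_).unique
    (hasDerivAt_gaussian_average φ ξ hr)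
  filter_upwards [Ioi_mem_nhds hr] with q hq
  exact (convol_heatKernel_eq hq φ ξ).symm

/-- The heat convolution and its time derivative decay polynomially, uniformly in time up to the
integrable singularity `r ^ (-1 / 2)` of the latter. -/
lemma exists_decay_convol (k : ℕ) (T : ℝ) :
    ∃ C, 0 ≤ C ∧ ∀ r, 0 < r → r ≤ T → ∀ ξ,
      |convol (heatKernel n r) φ ξ| ≤ C / (1 + ‖ξ‖) ^ k ∧
      |convol (heatKernelDt n r) φ ξ| ≤ C * r ^ (-(1 / 2) : ℝ) / (1 + ‖ξ‖) ^ k := by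
  obtain ⟨C, hC0, hC⟩ := φ.exists_decay k
  set I := ∫ z : EuclideanSpace ℝ (Fin n), heatKernel n 1 z * (1 + ‖z‖) ^ (k + 1)
  have hI : 0 ≤ I := integral_nonneg fun z =>
    mul_nonneg (heatKernel_nonneg zero_le_one z) (by positivity)
  refine ⟨C * (1 + √T) ^ k * I, by positivity, fun r hr hrT ξ => ⟨?_, ?_⟩⟩
  · rw [convol_heatKernel_eq hr]
    refine abs_integral_le_of_gaussian_decay hC0 (Real.sqrt_nonneg r)
      (Real.sqrt_le_sqrt hrT) ξ fun z => ?_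
    have hγ := heatKernel_nonneg zero_le_one z
    rw [abs_mul, abs_of_nonneg hγ]
    calc _ ≤ heatKernel n 1 z * 1 * (C / (1 + ‖ξ - √r • z‖) ^ k) := by
          rw [mul_one]
          exact mul_le_mul_of_nonneg_left (hC _).1 hγ
      _ ≤ heatKernel n 1 z * (1 + ‖z‖) * (C / (1 + ‖ξ - √r • z‖) ^ k) := by
          gcongr
          linarith [norm_nonneg z]
      _ = _ := by ring
  · rw [convol_heatKernelDt_eq φ ξ hr]
    have hsq : r ^ (-(1 / 2) : ℝ) = 1 / √r := by
      rw [Real.rpow_neg hr.le, ← Real.sqrt_eq_rpow, one_div]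
    have hsqrt : 0 < √r := Real.sqrt_pos.mpr hr
    rw [hsq, show C * (1 + √T) ^ k * I * (1 / √r) = C * (1 / √r) * (1 + √T) ^ k * I by ring]
    refine abs_integral_le_of_gaussian_decay (by positivity) (Real.sqrt_nonneg r)
      (Real.sqrt_le_sqrt hrT) ξ fun z => ?_
    have hγ := heatKernel_nonneg zero_le_one z
    have h2 : ‖-((1 / (2 * √r)) • z)‖ ≤ 1 / √r * (1 + ‖z‖) := by
      rw [norm_neg, norm_smul, Real.norm_of_nonneg (by positivity)]
      gcongr <;> linarith
    rw [abs_mul, abs_of_nonneg hγ]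
    calc _ ≤ heatKernel n 1 z *
          (C / (1 + ‖ξ - √r • z‖) ^ k * (1 / √r * (1 + ‖z‖))) := by
          gcongr
          exact (ContinuousLinearMap.le_opNorm _ _).trans
            (mul_le_mul (hC _).2 h2 (norm_nonneg _) (by positivity))
      _ = _ := by ring

lemma memLp_one_div_one_add_norm_pow {p : ℝ} (hp : 1 ≤ p) :
    MemLp (fun ξ : EuclideanSpace ℝ (Fin n) => 1 / (1 + ‖ξ‖) ^ (n + 1)) (ENNReal.ofReal p) := by
  have hcont : Continuous (fun ξ : EuclideanSpace ℝ (Fin n) => 1 / (1 + ‖ξ‖) ^ (n + 1)) :=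
    continuous_const.div (by fun_prop) fun ξ => by positivity
  have hp0 : 0 < p := zero_lt_one.trans_le hp
  rw [← integrable_norm_rpow_iff hcont.aestronglyMeasurable (by simpa using hp0)
    ENNReal.ofReal_ne_top, ENNReal.toReal_ofReal hp0.le]
  have hr : (Module.finrank ℝ (EuclideanSpace ℝ (Fin n)) : ℝ) < (n + 1 : ℕ) * p := by
    rw [finrank_euclideanSpace_fin]
    push_cast
    nlinarith [(Nat.cast_nonneg n : (0 : ℝ) ≤ n)]
  refine (integrable_one_add_norm hr).congr (Filter.Eventually.of_forall fun ξ => ?_)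
  have h1 : (0 : ℝ) ≤ 1 + ‖ξ‖ := by positivity
  simp only
  rw [Real.norm_of_nonneg (by positivity), one_div, Real.inv_rpow (by positivity),
    Real.rpow_neg h1, Real.rpow_mul h1, Real.rpow_natCast]

lemma lintegral_eLpNorm_lt_top_of_decay {p : ℝ} (hp : 1 ≤ p) {s t M : ℝ} (hst : s ≤ t)
    {c B : ℝ → ℝ} {h : ℝ → EuclideanSpace ℝ (Fin n) → ℝ} (hc : ∀ u ∈ Set.Icc s t, |c u| ≤ M)
    (hB : IntervalIntegrable B volume s t)
    (hh : ∀ u ∈ Set.Ioo s t, ∀ ξ, |h u ξ| ≤ B u / (1 + ‖ξ‖) ^ (n + 1)) :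
    (∫⁻ u in Set.Ioc s t, eLpNorm (fun ξ => c u * h u ξ) (ENNReal.ofReal p) volume) < ⊤ := by
  set w : EuclideanSpace ℝ (Fin n) → ℝ := fun ξ => 1 / (1 + ‖ξ‖) ^ (n + 1)
  have hw : eLpNorm w (ENNReal.ofReal p) volume < ⊤ :=
    (memLp_one_div_one_add_norm_pow hp).eLpNorm_lt_top
  have hint : Integrable (fun u => M * B u) (volume.restrict (Set.Ioc s t)) :=
    ((intervalIntegrable_iff_integrableOn_Ioc_of_le hst).mp hB).const_mul M
  rw [← restrict_Ioo_eq_restrict_Ioc] at hint ⊢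
  calc _ ≤ ∫⁻ u in Set.Ioo s t, ‖M * B u‖ₑ * eLpNorm w (ENNReal.ofReal p) volume := by
        refine setLIntegral_mono' measurableSet_Ioo fun u hu => ?_
        rw [← eLpNorm_const_smul]
        refine eLpNorm_mono_real fun ξ => ?_
        have h1 := hc u (Set.Ioo_subset_Icc_self hu)
        rw [norm_mul]
        calc ‖c u‖ * ‖h u ξ‖ ≤ M * (B u / (1 + ‖ξ‖) ^ (n + 1)) :=
              mul_le_mul h1 (hh u hu ξ) (norm_nonneg _) ((abs_nonneg _).trans h1)
          _ = _ := by simp only [Pi.smul_apply, smul_eq_mul, w]; ring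
    _ = (∫⁻ u in Set.Ioo s t, ‖M * B u‖ₑ) * eLpNorm w (ENNReal.ofReal p) volume :=
        lintegral_mul_const' _ _ hw.ne
    _ < ⊤ := ENNReal.mul_lt_top hint.hasFiniteIntegral hw

lemma intervalIntegrable_sub_rpow_neg_half (s t : ℝ) :
    IntervalIntegrable (fun u : ℝ => (t - u) ^ (-(1 / 2) : ℝ)) volume s t := by
  have h := (intervalIntegral.intervalIntegrable_rpow' (a := t - s) (b := 0)
    (r := -(1 / 2)) (by norm_num)).comp_sub_left t
  simpa using h

/-- Integration by parts in time against the heat convolution. -/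
lemma integral_mul_convol_heatKernel {a : ℝ → ℝ} (ha : Continuous a) {s t : ℝ} (hst : s ≤ t)
    (ξ : EuclideanSpace ℝ (Fin n)) :
    (∫ u in s..t, a u * convol (heatKernel n (t - u)) φ ξ) =
      (∫ u in s..t, a u) * φ ξ +
        ∫ u in s..t, (∫ v in s..u, a v) * convol (heatKernelDt n (t - u)) φ ξ := by
  set F : ℝ → ℝ := fun r => ∫ z, heatKernel n 1 z * φ (ξ - √r • z)
  have hFc : Continuous F := continuous_gaussian_average φ ξ
  have hFd : ∀ u < t, HasDerivAt (fun u => F (t - u))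
      (-convol (heatKernelDt n (t - u)) φ ξ) u := by
    intro u hu
    have h := hasDerivAt_gaussian_average φ ξ (sub_pos.mpr hu)
    rw [← convol_heatKernelDt_eq φ ξ (sub_pos.mpr hu)] at h
    exact h.comp_const_sub t u
  have hae : ∀ᵐ u : ℝ, u ≠ t := by simp [ae_iff]
  have hderiv : IntervalIntegrable (fun u => -convol (heatKernelDt n (t - u)) φ ξ)
      volume s t := by
    obtain ⟨C, -, hC⟩ := exists_decay_convol φ 0 (t - s)
    refine ((intervalIntegrable_sub_rpow_neg_half s t).const_mul C).mono_fun' ?_ ?_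
    · refine (measurable_deriv fun u => F (t - u)).aestronglyMeasurable.congr ?_
      filter_upwards [ae_restrict_of_ae hae, ae_restrict_mem measurableSet_uIoc] with u hne hu
      rw [Set.uIoc_of_le hst] at hu
      exact (hFd u (lt_of_le_of_ne hu.2 hne)).deriv
    · filter_upwards [ae_restrict_of_ae hae, ae_restrict_mem measurableSet_uIoc] with u hne hu
      rw [Set.uIoc_of_le hst] at hu
      rw [norm_neg]
      simpa using (hC (t - u) (sub_pos.mpr (lt_of_le_of_ne hu.2 hne))
        (by linarith [hu.1]) ξ).2
  have hparts := intervalIntegral.integral_mul_deriv_eq_deriv_mul_of_hasDeriv_right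
    (u := fun u => ∫ v in s..u, a v) (u' := a) (v := fun u => F (t - u))
    (intervalIntegral.continuous_primitive (fun _ _ => ha.intervalIntegrable _ _) s).continuousOn
    (by fun_prop)
    (fun u _ => (ha.integral_hasStrictDerivAt s u).hasDerivAt.hasDerivWithinAt)
    (fun u hu => (hFd u (by simpa [hst] using hu.2)).hasDerivWithinAt)
    (ha.intervalIntegrable s t) hderiv
  have hcongr : (∫ u in s..t, a u * convol (heatKernel n (t - u)) φ ξ) =
      ∫ u in s..t, a u * F (t - u) := by
    refine intervalIntegral.integral_congr_ae ?_
    filter_upwards [hae] with u hne hu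
    rw [Set.uIoc_of_le hst] at hu
    rw [convol_heatKernel_eq (sub_pos.mpr (lt_of_le_of_ne hu.2 hne))]
  have hF0 : F (t - t) = φ ξ := by
    rw [sub_self]
    exact gaussian_average_zero φ ξ
  simp only [mul_neg, intervalIntegral.integral_neg, intervalIntegral.integral_same, zero_mul,
    sub_zero, hF0] at hparts
  rw [hcongr]
  linarith

end HeatKernel

/-- integration by parts for the second-order heat-convolution
increment.  With `x : [0,T] → ℝ^N` continuously differentiable, `φ` Schwartz and
`x^{2,ij}_{ts} = ∫_s^t (x^i)'(u)(x^j_u - x^j_s) du`, one has, in `L^p(ℝ^n)`,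
`∫_s^t (x^i)'(u)(x^j_u - x^j_s)(g_{t-u} * φ) du
  = x^{2,ij}_{ts} φ + ∫_s^t x^{2,ij}_{us} (∂g_{t-u} * φ) du`,
all integrals being absolutely convergent Bochner integrals in `L^p(ℝ^n)`. -/
theorem integration_by_parts_second_order
    (n : ℕ) (hn : 1 ≤ n) (p : ℝ) (hp : 1 ≤ p) (T : ℝ) (hT : 0 < T)
    (N : ℕ) (hN : 1 ≤ N)
    (x : Fin N → ℝ → ℝ) (hx : ∀ i : Fin N, ContDiff ℝ 1 (x i))
    (φ : SchwartzMap (EuclideanSpace ℝ (Fin n)) ℝ)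
    (i j : Fin N) (s t : ℝ) (hs : 0 ≤ s) (hst : s ≤ t) (ht : t ≤ T) :
    ((∫⁻ u in Set.Ioc s t,
        eLpNorm (fun ξ => deriv (x i) u * (x j u - x j s)
            * convol (heatKernel n (t - u)) (⇑φ) ξ)
          (ENNReal.ofReal p) volume) < ⊤) ∧
    ((∫⁻ u in Set.Ioc s t,
        eLpNorm (fun ξ => (∫ v in s..u, deriv (x i) v * (x j v - x j s))
            * convol (heatKernelDt n (t - u)) (⇑φ) ξ)
          (ENNReal.ofReal p) volume) < ⊤) ∧
    (∀ ξ, (∫ u in s..t, deriv (x i) u * (x j u - x j s)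
            * convol (heatKernel n (t - u)) (⇑φ) ξ)
        = (∫ u in s..t, deriv (x i) u * (x j u - x j s)) * φ ξ
          + ∫ u in s..t, (∫ v in s..u, deriv (x i) v * (x j v - x j s))
              * convol (heatKernelDt n (t - u)) (⇑φ) ξ) := by
  have ha : Continuous fun u => deriv (x i) u * (x j u - x j s) :=
    ((hx i).continuous_deriv le_rfl).mul ((hx j).continuous.sub continuous_const)
  have hX : Continuous fun u => ∫ v in s..u, deriv (x i) v * (x j v - x j s) :=
    intervalIntegral.continuous_primitive (fun _ _ => ha.intervalIntegrable _ _) s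
  obtain ⟨C, -, hC⟩ := exists_decay_convol φ (n + 1) (t - s)
  have hr : ∀ u ∈ Set.Ioo s t, 0 < t - u ∧ t - u ≤ t - s := fun u hu =>
    ⟨sub_pos.mpr hu.2, by linarith [hu.1]⟩
  obtain ⟨M, hM⟩ := isCompact_Icc.exists_bound_of_continuousOn (s := Set.Icc s t) ha.continuousOn
  obtain ⟨M', hM'⟩ :=
    isCompact_Icc.exists_bound_of_continuousOn (s := Set.Icc s t) hX.continuousOn
  exact ⟨lintegral_eLpNorm_lt_top_of_decay hp hst hM (intervalIntegrable_const (c := C))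
      fun u hu ξ => (hC (t - u) (hr u hu).1 (hr u hu).2 ξ).1,
    lintegral_eLpNorm_lt_top_of_decay hp hst hM'
      ((intervalIntegrable_sub_rpow_neg_half s t).const_mul C)
      fun u hu ξ => (hC (t - u) (hr u hu).1 (hr u hu).2 ξ).2,
    integral_mul_convol_heatKernel φ ha hst⟩
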